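/- Let a > 0. Every separated sequence Λ ⊂ ℝ with lower Beurling density D⁻(Λ) > 1 contains a subsequence which is a complete interpolating sequence for the Gaussian shift-invariant space V²_a. -/

import Mathlib

open Filter MeasureTheory

/-- `gaussShiftSum c coef x = ∑_{n∈ℤ} coef n · e^{-c(x-n)²}`, the generic element of the
Gaussian shift-invariant space `V²_c`. -/
noncomputable def gaussShiftSum (c : ℂ) (coef : ℤ → ℂ) (x : ℝ) : ℂ :=
  ∑' n : ℤ, coef n * Complex.exp (-c * ((x : ℂ) - (n : ℂ)) ^ 2)

/-- A set `Λ ⊆ ℝ` is separated if distinct points are at distance at least some `ε > 0`. -/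
def IsSeparatedSet (Λ : Set ℝ) : Prop :=
  ∃ ε > 0, ∀ x ∈ Λ, ∀ y ∈ Λ, x ≠ y → ε ≤ |x - y|

/-- `Λ` is a sampling sequence for `V²_c`:
`A‖f‖² ≤ ∑_{λ∈Λ} |f(λ)|² ≤ B‖f‖²`, where `‖f‖²_{V²} = ∑ |c_n|²`. -/
def IsSamplingV2 (c : ℂ) (Λ : Set ℝ) : Prop :=
  ∃ A > 0, ∃ B > 0, ∀ coef : ℤ → ℂ, Summable (fun n => ‖coef n‖ ^ 2) →
    A * (∑' n : ℤ, ‖coef n‖ ^ 2) ≤ (∑' lam : Λ, ‖gaussShiftSum c coef (lam : ℝ)‖ ^ 2) ∧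
    (∑' lam : Λ, ‖gaussShiftSum c coef (lam : ℝ)‖ ^ 2) ≤ B * (∑' n : ℤ, ‖coef n‖ ^ 2)

/-- `Λ` is an interpolating sequence for `V²_c`: every `ℓ²` data on `Λ` is interpolated by
some `f ∈ V²_c`. -/
def IsInterpolatingV2 (c : ℂ) (Λ : Set ℝ) : Prop :=
  ∀ a : Λ → ℂ, Summable (fun lam => ‖a lam‖ ^ 2) →
    ∃ coef : ℤ → ℂ, Summable (fun n => ‖coef n‖ ^ 2) ∧
      ∀ lam : Λ, gaussShiftSum c coef (lam : ℝ) = a lam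

/-- A complete interpolating sequence is one that is both sampling and interpolating. -/
def IsCompleteInterpolatingV2 (c : ℂ) (Λ : Set ℝ) : Prop :=
  IsSamplingV2 c Λ ∧ IsInterpolatingV2 c Λ

/-- Lower Beurling density `D⁻(Λ) = lim_{r→∞} inf_x card(Λ ∩ [x,x+r]) / r`. -/
noncomputable def lowerBeurlingDensity (Λ : Set ℝ) : ℝ :=
  liminf (fun r : ℝ => (⨅ x : ℝ, ((Λ ∩ Set.Icc x (x + r)).ncard : ℝ)) / r) atTop

/-- Upper Beurling density `D⁺(Λ) = lim_{r→∞} sup_x card(Λ ∩ [x,x+r]) / r`. -/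
noncomputable def upperBeurlingDensity (Λ : Set ℝ) : ℝ :=
  limsup (fun r : ℝ => (⨆ x : ℝ, ((Λ ∩ Set.Icc x (x + r)).ncard : ℝ)) / r) atTop

theorem density_extract (Λ : Set ℝ) (hdens : 1 < lowerBeurlingDensity Λ) :
    ∃ b : ℝ, 1 < b ∧ ∃ R : ℝ, 0 < R ∧ ∀ r, R ≤ r → ∀ x : ℝ,
      b * r ≤ ((Λ ∩ Set.Icc x (x + r)).ncard : ℝ) := by
  unfold lowerBeurlingDensity at hdens
  rw [Filter.liminf_eq] at hdens
  have hne : {b : ℝ | ∀ᶠ r : ℝ in atTop,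
      b ≤ (⨅ x : ℝ, ((Λ ∩ Set.Icc x (x + r)).ncard : ℝ)) / r}.Nonempty := by
    by_contra h
    rw [Set.not_nonempty_iff_eq_empty] at h
    rw [h, Real.sSup_empty] at hdens
    linarith
  obtain ⟨b, hb, hb1⟩ := exists_lt_of_lt_csSup hne hdens
  obtain ⟨R, hR⟩ := eventually_atTop.1 hb
  refine ⟨b, hb1, max R 1, by positivity, fun r hr x => ?_⟩
  have hr1 : 1 ≤ r := le_trans (le_max_right _ _) hr
  have h := hR r (le_trans (le_max_left _ _) hr)
  rw [le_div_iff₀ (by linarith)] at h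
  refine h.trans (ciInf_le ⟨0, ?_⟩ x)
  rintro _ ⟨y, rfl⟩
  positivity

theorem block_left (Λ : Set ℝ) (b : ℝ) (hb : 1 < b) (R : ℝ) (hR : 0 < R)
    (H : ∀ r, R ≤ r → ∀ x : ℝ, b * r ≤ ((Λ ∩ Set.Icc x (x + r)).ncard : ℝ)) :
    ∃ L0 : ℕ, ∀ L : ℕ, L0 ≤ L → ∀ x : ℝ, ∃ f : ℕ → ℝ,
      (∀ i < L, f i ∈ Λ ∧ x ≤ f i ∧ f i ≤ x + (L - 1)) ∧
      (∀ i j, i < j → j < L → f i < f j) ∧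
      ∑ i ∈ Finset.range L, (f i - x - i) ≤ 0 := by
  have hb0 : 0 < b := by linarith
  have hb' : 0 < 1 - 1 / b := by
    rw [sub_pos, div_lt_one hb0]; exact hb
  obtain ⟨L0, hL0⟩ := exists_nat_ge (2 * (R + 1 / b) / (1 - 1 / b) + R + b / (b - 1) + 2)
  refine ⟨L0, fun L hL x => ?_⟩
  have hLr : (L0 : ℝ) ≤ L := by exact_mod_cast hL
  have hp1 : 0 < 2 * (R + 1 / b) / (1 - 1 / b) := by positivity
  have hp2 : 0 < b / (b - 1) := div_pos hb0 (by linarith)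
  have hL1 : R ≤ (L : ℝ) - 1 := by linarith
  have hL2 : b / (b - 1) ≤ (L : ℝ) := by linarith
  have hL3 : 2 * (R + 1 / b) / (1 - 1 / b) ≤ (L : ℝ) - 1 := by linarith
  rw [div_le_iff₀ (by linarith)] at hL2
  rw [div_le_iff₀ hb'] at hL3
  have hc := H _ hL1 x
  have hcL : (L : ℝ) ≤ ((Λ ∩ Set.Icc x (x + (L - 1))).ncard : ℝ) := by
    refine le_trans ?_ hc
    nlinarith
  have hcL' : L ≤ (Λ ∩ Set.Icc x (x + (L - 1))).ncard := by exact_mod_cast hcL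
  have hLpos : 0 < L := by
    have : (0 : ℝ) < L := by linarith
    exact_mod_cast this
  have hfin : (Λ ∩ Set.Icc x (x + (L - 1))).Finite := Set.finite_of_ncard_pos (by omega)
  rw [Set.ncard_eq_toFinset_card _ hfin] at hcL'
  set s := hfin.toFinset with hs
  set e := s.orderEmbOfFin rfl with he
  have hmem : ∀ i, e i ∈ Λ ∩ Set.Icc x (x + (L - 1)) := fun i => by
    have : e i ∈ s := Finset.orderEmbOfFin_mem s rfl i
    exact hfin.mem_toFinset.1 this
  have hmemI : ∀ y ∈ Λ ∩ Set.Icc x (x + (L - 1)), ∃ i, e i = y := fun y hy => by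
    have : y ∈ Set.range e := by
      rw [he, Finset.range_orderEmbOfFin]
      simpa [hs] using hy
    exact this
  refine ⟨fun i => if h : i < s.card then e ⟨i, h⟩ else 0, ?_, ?_, ?_⟩
  · intro i hi
    have hi' : i < s.card := lt_of_lt_of_le hi hcL'
    simp only [hi', dif_pos]
    obtain ⟨h1, h2, h3⟩ := hmem ⟨i, hi'⟩
    exact ⟨h1, h2, h3⟩
  · intro i j hij hj
    have hj' : j < s.card := lt_of_lt_of_le hj hcL'
    have hi' : i < s.card := by omega
    simp only [hi', hj', dif_pos]
    exact e.strictMono hij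
  · have key : ∀ i ∈ Finset.range L,
        (if h : i < s.card then e ⟨i, h⟩ else 0) - x - i ≤ R + 1 / b - (1 - 1 / b) * i := by
      intro i hi
      have hi' : i < s.card := lt_of_lt_of_le (Finset.mem_range.1 hi) hcL'
      simp only [hi', dif_pos]
      by_contra hcon
      push Not at hcon
      set r := R + (i + 1) / b with hr
      have hir : 0 < ((i : ℝ) + 1) / b := by positivity
      have hgt : x + r < e ⟨i, hi'⟩ := by
        rw [hr, add_div]
        have : (i : ℝ) / b = 1 / b * i := by ring
        linarith
      have h1 := H r (by linarith) x
      have h2 : (i : ℝ) + 1 ≤ b * r := by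
        rw [hr, mul_add, mul_div_cancel₀ _ hb0.ne']
        nlinarith
      have h3 : i + 1 ≤ (Λ ∩ Set.Icc x (x + r)).ncard := by
        have := h2.trans h1
        exact_mod_cast this
      have h4 : Λ ∩ Set.Icc x (x + r) ⊆ ((Finset.univ.filter (fun j : Fin s.card => j.1 < i)).image e : Finset ℝ) := by
        rintro y ⟨hy1, hy2, hy3⟩
        obtain ⟨j, hj⟩ := hmemI y ⟨hy1, hy2, by
          have := (hmem ⟨i, hi'⟩).2.2
          linarith⟩
        simp only [Finset.coe_image, Set.mem_image, Finset.mem_coe, Finset.mem_filter, Finset.mem_univ, true_and]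
        refine ⟨j, ?_, hj⟩
        by_contra hji
        push Not at hji
        have : e ⟨i, hi'⟩ ≤ e j := e.monotone hji
        linarith
      have h5 := Set.ncard_le_ncard h4 (Finset.finite_toSet _)
      rw [Set.ncard_coe_finset] at h5
      have h6 := (Finset.card_image_le (s := Finset.univ.filter (fun j : Fin s.card => j.1 < i)) (f := e))
      have h7 : (Finset.univ.filter (fun j : Fin s.card => j.1 < i)).card ≤ i := by
        have := Finset.card_le_card_of_injOn (s := Finset.univ.filter (fun j : Fin s.card => j.1 < i))
          (t := Finset.range i) (fun j => j.1) (by intro j hj; simpa using hj)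
          (by intro a _ b _ h; exact Fin.ext h)
        simpa using this
      omega
    refine (Finset.sum_le_sum key).trans ?_
    rw [Finset.sum_sub_distrib, ← Finset.mul_sum, Finset.sum_const, Finset.card_range, nsmul_eq_mul]
    have hg : ∑ i ∈ Finset.range L, (i : ℝ) = L * (L - 1) / 2 := by
      clear * -
      induction L with
      | zero => simp
      | succ n ih => rw [Finset.sum_range_succ, ih]; push_cast; ring
    rw [hg]
    have hL0' : (0 : ℝ) < L := by exact_mod_cast hLpos
    nlinarith

theorem block_right (Λ : Set ℝ) (b : ℝ) (hb : 1 < b) (R : ℝ) (hR : 0 < R)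
    (H : ∀ r, R ≤ r → ∀ x : ℝ, b * r ≤ ((Λ ∩ Set.Icc x (x + r)).ncard : ℝ)) :
    ∃ L0 : ℕ, ∀ L : ℕ, L0 ≤ L → ∀ x : ℝ, ∃ f : ℕ → ℝ,
      (∀ i < L, f i ∈ Λ ∧ x ≤ f i ∧ f i ≤ x + (L - 1)) ∧
      (∀ i j, i < j → j < L → f i < f j) ∧
      0 ≤ ∑ i ∈ Finset.range L, (f i - x - i) := by
  obtain ⟨L0, h⟩ := block_left (-Λ) b hb R hR (by
    intro r hr x
    refine (H r hr (-(x + r))).trans (le_of_eq ?_)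
    have : -Λ ∩ Set.Icc x (x + r) = (fun y : ℝ => -y) '' (Λ ∩ Set.Icc (-(x + r)) (-(x + r) + r)) := by
      ext y
      simp only [Set.mem_inter_iff, Set.mem_neg, Set.mem_Icc, Set.mem_image]
      constructor
      · rintro ⟨h1, h2, h3⟩
        exact ⟨-y, ⟨h1, by linarith, by linarith⟩, by ring⟩
      · rintro ⟨z, ⟨h1, h2, h3⟩, rfl⟩
        exact ⟨by simpa using h1, by linarith, by linarith⟩
    rw [this, Set.ncard_image_of_injective _ neg_injective])
  refine ⟨L0, fun L hL x => ?_⟩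
  obtain ⟨f, hf1, hf2, hf3⟩ := h L hL (-(x + (L - 1)))
  refine ⟨fun i => - f (L - 1 - i), ?_, ?_, ?_⟩
  · intro i hi
    obtain ⟨h1, h2, h3⟩ := hf1 (L - 1 - i) (by omega)
    exact ⟨h1, by linarith, by linarith⟩
  · intro i j hij hj
    have := hf2 (L - 1 - j) (L - 1 - i) (by omega) (by omega)
    simpa using this
  · have : ∑ i ∈ Finset.range L, (- f (L - 1 - i) - x - i)
        = ∑ i ∈ Finset.range L, -(f i - -(x + (L - 1)) - i) := by
      rw [← Finset.sum_range_reflect (fun i : ℕ => -(f i - -(x + ((L : ℝ) - 1)) - i))]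
      refine Finset.sum_congr rfl fun i hi => ?_
      have hi := Finset.mem_range.1 hi
      have h1 : ((L - 1 - i : ℕ) : ℝ) = (L : ℝ) - 1 - i := by
        rw [Nat.cast_sub (by omega), Nat.cast_sub (by omega)]; simp
      rw [h1]; ring
    rw [this, Finset.sum_neg_distrib]
    linarith

theorem balance_nat (K : ℝ) (l r : ℕ → ℝ) (hl : ∀ j, -K ≤ l j ∧ l j ≤ 0)
    (hr : ∀ j, 0 ≤ r j ∧ r j ≤ K) :
    ∃ (c : ℕ → Bool) (T : ℕ → ℝ), T 0 = 0 ∧ (∀ j, |T j| ≤ K) ∧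
      ∀ j, T (j + 1) = T j + (if c j then l j else r j) := by
  classical
  let T : ℕ → ℝ := fun n => Nat.rec (motive := fun _ => ℝ) 0 (fun j t => t + (if 0 < t then l j else r j)) n
  have hT : ∀ j, T (j + 1) = T j + (if 0 < T j then l j else r j) := fun j => rfl
  refine ⟨fun j => decide ((0 : ℝ) < T j), T, rfl, ?_, fun j => by rw [hT]; simp⟩
  intro j
  induction j with
  | zero =>
    show |(0 : ℝ)| ≤ K
    rw [abs_zero]; linarith [hr 0]
  | succ n ih =>
    rw [hT]
    rw [abs_le] at ih ⊢
    have h1 := hl n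
    have h2 := hr n
    split_ifs with h
    · constructor <;> linarith
    · push Not at h
      constructor <;> linarith

theorem balance_int (K : ℝ) (l r : ℤ → ℝ) (hl : ∀ j, -K ≤ l j ∧ l j ≤ 0)
    (hr : ∀ j, 0 ≤ r j ∧ r j ≤ K) :
    ∃ (c : ℤ → Bool) (T : ℤ → ℝ), (∀ j, |T j| ≤ K) ∧
      ∀ j, T (j + 1) = T j + (if c j then l j else r j) := by
  obtain ⟨c1, T1, h10, h1b, h1⟩ := balance_nat K (fun j => l j) (fun j => r j)
    (fun j => hl j) (fun j => hr j)
  obtain ⟨c2, T2, h20, h2b, h2⟩ := balance_nat K (fun j => - r (Int.negSucc j))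
    (fun j => - l (Int.negSucc j))
    (fun j => by have := hr (Int.negSucc j); constructor <;> linarith)
    (fun j => by have := hl (Int.negSucc j); constructor <;> linarith)
  refine ⟨fun j => match j with
      | Int.ofNat n => c1 n
      | Int.negSucc n => ! c2 n,
    fun j => match j with
      | Int.ofNat n => T1 n
      | Int.negSucc n => T2 (n + 1), ?_, ?_⟩
  · rintro (n | n)
    · exact h1b n
    · exact h2b (n + 1)
  · rintro (n | n)
    · exact h1 n
    · rcases n with _ | n
      · show T1 0 = T2 1 + _
        rw [h2, h10, h20]
        cases h : c2 0 <;> simp [h]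
      · show T2 (n + 1) = T2 (n + 1 + 1) + _
        rw [h2 (n + 1)]
        cases h : c2 (n + 1) <;> simp [h]

theorem select_seq (Λ : Set ℝ) (hdens : 1 < lowerBeurlingDensity Λ) :
    ∃ (lam P : ℤ → ℝ) (K : ℝ), StrictMono lam ∧ (∀ k, lam k ∈ Λ) ∧ (∀ k, |P k| ≤ K) ∧
      ∀ k, P k = P (k - 1) + (lam k - k) := by
  obtain ⟨b, hb, R, hR, H⟩ := density_extract Λ hdens
  obtain ⟨L1, hL1⟩ := block_left Λ b hb R hR H
  obtain ⟨L2, hL2⟩ := block_right Λ b hb R hR H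
  obtain ⟨L, hLa, hLb, hLpos⟩ : ∃ L : ℕ, L1 ≤ L ∧ L2 ≤ L ∧ 0 < L :=
    ⟨L1 + L2 + 1, by omega, by omega, by omega⟩
  choose fl hl1 hl2 hl3 using fun j : ℤ => hL1 L hLa (j * L)
  choose fr hr1 hr2 hr3 using fun j : ℤ => hL2 L hLb (j * L)
  have hLr : (0 : ℝ) < L := by exact_mod_cast hLpos
  have habs : ∀ (g : ℕ → ℝ) (x : ℝ), (∀ i < L, g i ∈ Λ ∧ x ≤ g i ∧ g i ≤ x + (L - 1)) →
      ∀ M ≤ L, |∑ i ∈ Finset.range M, (g i - x - i)| ≤ L * L := by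
    intro g x hg M hM
    refine (Finset.abs_sum_le_sum_abs _ _).trans ?_
    have : ∀ i ∈ Finset.range M, |g i - x - i| ≤ (L : ℝ) := by
      intro i hi
      have hi := Finset.mem_range.1 hi
      obtain ⟨_, h1, h2⟩ := hg i (by omega)
      have hiL : (i : ℝ) ≤ L := by exact_mod_cast (by omega : i ≤ L)
      have hi0 : (0 : ℝ) ≤ i := by positivity
      rw [abs_le]; constructor <;> linarith
    refine (Finset.sum_le_sum this).trans ?_
    rw [Finset.sum_const, Finset.card_range, nsmul_eq_mul]
    have : (M : ℝ) ≤ L := by exact_mod_cast hM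
    nlinarith
  obtain ⟨c, T, hTb, hT⟩ := balance_int (L * L)
    (fun j => ∑ i ∈ Finset.range L, (fl j i - (j * L) - i))
    (fun j => ∑ i ∈ Finset.range L, (fr j i - (j * L) - i))
    (fun j => ⟨(abs_le.1 (habs _ _ (hl1 j) L le_rfl)).1, hl3 j⟩)
    (fun j => ⟨hr3 j, (abs_le.1 (habs _ _ (hr1 j) L le_rfl)).2⟩)
  obtain ⟨f, hf1, hf2, hf3⟩ : ∃ f : ℤ → ℕ → ℝ,
      (∀ j, ∀ i < L, f j i ∈ Λ ∧ (j : ℝ) * L ≤ f j i ∧ f j i ≤ j * L + (L - 1)) ∧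
      (∀ j, ∀ i i', i < i' → i' < L → f j i < f j i') ∧
      ∀ j, T (j + 1) = T j + ∑ i ∈ Finset.range L, (f j i - (j * L) - i) := by
    refine ⟨fun j => if c j then fl j else fr j, ?_, ?_, ?_⟩
    · intro j
      cases h : c j
      · simpa [h] using hr1 j
      · simpa [h] using hl1 j
    · intro j
      cases h : c j
      · simpa [h] using hr2 j
      · simpa [h] using hl2 j
    · intro j
      rw [hT j]
      cases h : c j <;> simp [h]
  have hLz : (0 : ℤ) < L := by exact_mod_cast hLpos
  -- representation of integers
  have hrep : ∀ k : ℤ, ∃ (j : ℤ) (i : ℕ), i < L ∧ k = j * L + i ∧ k / L = j ∧ (k % L).toNat = i := by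
    intro k
    refine ⟨k / L, (k % L).toNat, ?_, ?_, rfl, rfl⟩
    · have := Int.emod_lt_of_pos k hLz
      omega
    · have h0 := Int.emod_nonneg k hLz.ne'
      rw [Int.toNat_of_nonneg h0]
      exact (Int.ediv_mul_add_emod k L).symm
  have hdiv : ∀ (j : ℤ) (i : ℕ), i < L → (j * L + i) / (L : ℤ) = j ∧ ((j * L + i) % (L : ℤ)).toNat = i := by
    intro j i hi
    have hi' : (i : ℤ) < L := by exact_mod_cast hi
    have h1 : (j * L + i) / (L : ℤ) = j := by
      rw [add_comm, Int.add_mul_ediv_right _ _ hLz.ne', Int.ediv_eq_zero_of_lt (by positivity) hi']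
      ring
    have h2 : (j * L + i) % (L : ℤ) = i := by
      rw [add_comm, Int.add_mul_emod_self_right, Int.emod_eq_of_lt (by positivity) hi']
    exact ⟨h1, by rw [h2]; simp⟩
  let lam : ℤ → ℝ := fun k => f (k / L) (k % L).toNat
  let P : ℤ → ℝ := fun k => T (k / L) + ∑ i ∈ Finset.range ((k % L).toNat + 1), (f (k / L) i - ((k / L : ℤ) * L) - i)
  have hlam : ∀ (j : ℤ) (i : ℕ), i < L → lam (j * L + i) = f j i := by
    intro j i hi
    obtain ⟨h1, h2⟩ := hdiv j i hi
    simp only [lam]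
    rw [h1, h2]
  have hP : ∀ (j : ℤ) (i : ℕ), i < L → P (j * L + i) = T j + ∑ i ∈ Finset.range (i + 1), (f j i - (j * L) - i) := by
    intro j i hi
    obtain ⟨h1, h2⟩ := hdiv j i hi
    simp only [P]
    rw [h1, h2]
  refine ⟨lam, P, L * L + L * L, ?_, ?_, ?_, ?_⟩
  · apply strictMono_int_of_lt_succ
    intro k
    obtain ⟨j, i, hi, hk, -, -⟩ := hrep k
    by_cases h : i + 1 < L
    · have : k + 1 = j * L + (i + 1 : ℕ) := by rw [hk]; push_cast; ring
      rw [this, hk, hlam j i hi, hlam j (i + 1) h]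
      exact hf2 j i (i + 1) (by omega) h
    · have hiL : L = i + 1 := by omega
      have : k + 1 = (j + 1) * L + (0 : ℕ) := by rw [hk, hiL]; push_cast; ring
      rw [this, hk, hlam j i hi, hlam (j + 1) 0 hLpos]
      have h1 := (hf1 j i hi).2.2
      have h2 := (hf1 (j + 1) 0 hLpos).2.1
      push_cast at h2
      linarith
  · intro k
    obtain ⟨j, i, hi, hk, -, -⟩ := hrep k
    rw [hk, hlam j i hi]
    exact (hf1 j i hi).1
  · intro k
    obtain ⟨j, i, hi, hk, -, -⟩ := hrep k
    rw [hk, hP j i hi]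
    exact (abs_add_le _ _).trans (add_le_add (hTb j) (habs _ _ (hf1 j) (i + 1) hi))
  · intro k
    obtain ⟨j, i, hi, hk, -, -⟩ := hrep k
    rcases i with _ | i
    · have h1 : k - 1 = (j - 1) * L + (L - 1 : ℕ) := by
        rw [hk, Nat.cast_sub (by omega)]; push_cast; ring
      rw [h1, hP (j - 1) (L - 1) (by omega), Nat.sub_add_cancel (by omega : 1 ≤ L), ← hf3 (j - 1),
        hk, hP j 0 hi, hlam j 0 hi, sub_add_cancel]
      simp
    · have h1 : k - 1 = j * L + (i : ℕ) := by
        rw [hk]; push_cast; ring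
      rw [h1, hP j i (by omega), hk, hP j (i + 1) hi, hlam j (i + 1) hi, Finset.sum_range_succ _ (i + 1)]
      push_cast
      ring

theorem summable_exp_abs (ε : ℝ) (hε : 0 < ε) :
    Summable (fun k : ℤ => Real.exp (-ε * |(k : ℝ)|)) := by
  have h : Summable (fun n : ℕ => Real.exp (-ε * n)) := by
    have := summable_geometric_of_lt_one (Real.exp_pos (-ε)).le (Real.exp_lt_one_iff.2 (by linarith))
    refine this.congr fun n => ?_
    rw [← Real.exp_nat_mul]; ring_nf
  refine Summable.of_nat_of_neg (h.congr fun n => ?_) (h.congr fun n => ?_)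
  · simp
  · simp

theorem sum_exp_abs_le (ε : ℝ) (hε : 0 < ε) (s : Finset ℤ) (m : ℤ) :
    ∑ k ∈ s, Real.exp (-ε * |(m : ℝ) - k|) ≤ ∑' k : ℤ, Real.exp (-ε * |(k : ℝ)|) := by
  have h := summable_exp_abs ε hε
  have h2 : Summable (fun k : ℤ => Real.exp (-ε * |(m : ℝ) - k|)) := by
    have := (Equiv.subLeft m).summable_iff.2 h
    refine this.congr fun k => ?_
    simp
  refine (h2.sum_le_tsum s (fun _ _ => (Real.exp_pos _).le)).trans (le_of_eq ?_)
  rw [← (Equiv.subLeft m).tsum_eq]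
  refine tsum_congr fun k => ?_
  simp

theorem coeff_prod_bound (s : Finset ℤ) (z : ℤ → ℝ) (hz : ∀ k, 0 < z k) (r : ℝ) (hr : 0 < r) :
    ∀ j : ℕ, |(∏ k ∈ s, (Polynomial.X - Polynomial.C (z k))).coeff j| * r ^ j
      ≤ ∏ k ∈ s, (r + z k) := by
  classical
  induction s using Finset.induction_on with
  | empty =>
    intro j
    rcases j with _ | j
    · simp
    · simp [Polynomial.coeff_one]
  | insert k s hk ih =>
    intro j
    rw [Finset.prod_insert hk, Finset.prod_insert hk]
    set Q := ∏ k ∈ s, (Polynomial.X - Polynomial.C (z k)) with hQ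
    have hz' := hz k
    have hpos : 0 ≤ ∏ k ∈ s, (r + z k) := Finset.prod_nonneg fun i _ => by linarith [hz i]
    rcases j with _ | j
    · have h := ih 0
      simp only [Polynomial.mul_coeff_zero, Polynomial.coeff_sub, Polynomial.coeff_X_zero,
        Polynomial.coeff_C_zero, zero_sub, abs_mul, abs_neg, pow_zero, mul_one] at h ⊢
      rw [abs_of_pos hz']
      nlinarith [abs_nonneg (Q.coeff 0)]
    · have h1 := ih j
      have h2 := ih (j + 1)
      rw [sub_mul, Polynomial.coeff_sub, Polynomial.coeff_X_mul, Polynomial.coeff_C_mul]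
      calc |Q.coeff j - z k * Q.coeff (j + 1)| * r ^ (j + 1)
          ≤ (|Q.coeff j| + z k * |Q.coeff (j + 1)|) * r ^ (j + 1) := by
            gcongr
            refine (abs_sub _ _).trans ?_
            rw [abs_mul, abs_of_pos hz']
        _ = r * (|Q.coeff j| * r ^ j) + z k * (|Q.coeff (j + 1)| * r ^ (j + 1)) := by ring
        _ ≤ r * (∏ k ∈ s, (r + z k)) + z k * (∏ k ∈ s, (r + z k)) := by gcongr
        _ = _ := by ring

theorem exp_add_bound (u v t : ℝ) (h : t ≤ |u - v|) :
    Real.exp u + Real.exp v ≤ Real.exp (max u v + Real.exp (-t)) := by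
  have h1 : Real.exp u + Real.exp v = Real.exp (max u v) * (1 + Real.exp (-|u - v|)) := by
    rcases le_total u v with huv | huv
    · rw [max_eq_right huv, abs_of_nonpos (by linarith), mul_add, ← Real.exp_add]; ring_nf
    · rw [max_eq_left huv, abs_of_nonneg (by linarith), mul_add, ← Real.exp_add]; ring_nf
  rw [h1, Real.exp_add]
  gcongr
  have h2 : Real.exp (-|u - v|) ≤ Real.exp (-t) := Real.exp_le_exp.2 (by linarith)
  linarith [Real.add_one_le_exp (Real.exp (-t))]

theorem exp_sub_bound (u v t q : ℝ) (h : t ≤ |u - v|) (htq : Real.exp (-t) ≤ q) (hq : q < 1) :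
    Real.exp (max u v - Real.exp (-t) / (1 - q)) ≤ |Real.exp u - Real.exp v| := by
  have h1 : |Real.exp u - Real.exp v| = Real.exp (max u v) * (1 - Real.exp (-|u - v|)) := by
    rcases le_total u v with huv | huv
    · rw [max_eq_right huv, abs_of_nonpos (sub_nonpos.2 huv), mul_sub, ← Real.exp_add,
        abs_of_nonpos (by linarith [Real.exp_le_exp.2 huv])]; ring_nf
    · rw [max_eq_left huv, abs_of_nonneg (sub_nonneg.2 huv), mul_sub, ← Real.exp_add,
        abs_of_nonneg (by linarith [Real.exp_le_exp.2 huv])]; ring_nf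
  rw [h1, Real.exp_sub, div_eq_mul_inv]
  gcongr
  have h2 : Real.exp (-|u - v|) ≤ Real.exp (-t) := Real.exp_le_exp.2 (by linarith)
  refine le_trans ?_ (by linarith : 1 - Real.exp (-t) ≤ _)
  set w := Real.exp (-t) with hw
  have hw0 : 0 < w := Real.exp_pos _
  rw [inv_le_comm₀ (Real.exp_pos _) (by linarith)]
  have h3 : (1 - w)⁻¹ = w / (1 - w) + 1 := by
    field_simp [(by linarith : (1 - w) ≠ 0)]
    ring
  rw [h3]
  refine le_trans ?_ (Real.add_one_le_exp _)
  gcongr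

theorem sum_max_eq (lam U : ℤ → ℝ) (hm : StrictMono lam) (hU : ∀ k, U k = U (k - 1) + lam k)
    (A n : ℤ) (hA : A ≤ n) : ∀ M : ℤ, n ≤ M →
    ∑ k ∈ Finset.Icc A M, max (lam n) (lam k) = (n - A + 1) * lam n + U M - U n := by
  refine Int.leInduction ?_ ?_
  · have : ∀ k ∈ Finset.Icc A n, max (lam n) (lam k) = lam n := fun k hk =>
      max_eq_left (hm.monotone (Finset.mem_Icc.1 hk).2)
    rw [Finset.sum_congr rfl this, Finset.sum_const, nsmul_eq_mul, Int.card_Icc]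
    have : (((n + 1 - A).toNat : ℕ) : ℝ) = n - A + 1 := by
      have h : (((n + 1 - A).toNat : ℕ) : ℤ) = n + 1 - A := Int.toNat_of_nonneg (by omega)
      have h' : (((n + 1 - A).toNat : ℤ) : ℝ) = ((n + 1 - A : ℤ) : ℝ) := by rw [h]
      push_cast at h' ⊢
      linarith
    rw [this]; ring
  · intro M hM ih
    have : Finset.Icc A (M + 1) = insert (M + 1) (Finset.Icc A M) := by
      ext k; simp only [Finset.mem_Icc, Finset.mem_insert]; omega
    rw [this, Finset.sum_insert (by simp), ih, max_eq_right (hm.monotone (by omega)), hU (M + 1),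
      add_sub_cancel_right]
    ring

theorem exponent_bound (lam P : ℤ → ℝ) (K : ℝ) (hm : StrictMono lam) (hPb : ∀ k, |P k| ≤ K)
    (hP : ∀ k, P k = P (k - 1) + (lam k - k)) (N : ℤ) (n m : ℤ) (hn : n ∈ Finset.Icc (-N) N)
    (hmN : m ∈ Finset.Icc (-N) N) :
    (n : ℝ) ^ 2 + (lam m) ^ 2 + 2 * N * lam m - 2 * (n + N) * lam n
      + 2 * ∑ k ∈ (Finset.Icc (-N) N).erase m, (max (lam n) (lam k) - max (lam m) (lam k))
      ≤ (4 * K ^ 2 + 12 * K) - |(n : ℝ) - m| := by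
  rw [Finset.mem_Icc] at hn
  have hmN' := Finset.mem_Icc.1 hmN
  have hU : ∀ k : ℤ, P k + (k : ℝ) * (k + 1) / 2
      = (P (k - 1) + ((k - 1 : ℤ) : ℝ) * ((k - 1 : ℤ) + 1) / 2) + lam k := by
    intro k; rw [hP k]; push_cast; ring
  have e1 := sum_max_eq lam (fun k => P k + (k : ℝ) * (k + 1) / 2) hm hU (-N) n hn.1 N hn.2
  have e2 := sum_max_eq lam (fun k => P k + (k : ℝ) * (k + 1) / 2) hm hU (-N) m hmN'.1 N hmN'.2
  have e3 := Finset.add_sum_erase (Finset.Icc (-N) N)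
    (fun k => max (lam n) (lam k) - max (lam m) (lam k)) hmN
  rw [Finset.sum_sub_distrib (s := Finset.Icc (-N) N), e1, e2] at e3
  simp only [max_self] at e3
  push_cast at e3
  have hd : ∀ k, |lam k - k| ≤ 2 * K := by
    intro k
    have h : lam k - k = P k - P (k - 1) := by rw [hP k]; ring
    rw [h]
    exact (abs_sub _ _).trans (by linarith [hPb k, hPb (k - 1)])
  have hdm := abs_le.1 (hd m)
  have hdn := abs_le.1 (hd n)
  have hPn := abs_le.1 (hPb n)
  have hPm := abs_le.1 (hPb m)
  have hsq : (lam m - m) ^ 2 ≤ 4 * K ^ 2 := by nlinarith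
  rcases le_total m n with h | h
  · have h' : (m : ℝ) ≤ n := by exact_mod_cast h
    rw [max_eq_left (hm.monotone h)] at e3
    rw [abs_of_nonneg (by linarith)]
    nlinarith
  · have h' : (n : ℝ) ≤ m := by exact_mod_cast h
    rw [max_eq_right (hm.monotone h)] at e3
    rw [abs_of_nonpos (by linarith)]
    nlinarith

theorem sep_lower (lam : ℤ → ℝ) (ε : ℝ) (hm : StrictMono lam)
    (hs : ∀ j k, j ≠ k → ε ≤ |lam j - lam k|) (j k : ℤ) :
    ε * |(j : ℝ) - k| ≤ |lam j - lam k| := by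
  have hstep : ∀ j, lam j + ε ≤ lam (j + 1) := by
    intro j
    have h := hs (j + 1) j (by omega)
    rw [abs_of_pos (by linarith [hm (by omega : j < j + 1)])] at h
    linarith
  have key : ∀ j k : ℤ, j ≤ k → lam j + ε * ((k : ℝ) - j) ≤ lam k := by
    intro j
    refine Int.leInduction ?_ ?_
    · simp
    · intro k hk ih
      have := hstep k
      push_cast
      linarith
  rcases le_total j k with h | h
  · have h1 := key j k h
    have h' : (j : ℝ) ≤ k := by exact_mod_cast h
    rw [abs_of_nonpos (by linarith), abs_of_nonpos (by linarith [hm.monotone h])]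
    linarith
  · have h1 := key k j h
    have h' : (k : ℝ) ≤ j := by exact_mod_cast h
    rw [abs_of_nonneg (by linarith), abs_of_nonneg (by linarith [hm.monotone h])]
    linarith

theorem finite_inv (a : ℝ) (ha : 0 < a) (lam P : ℤ → ℝ) (K ε : ℝ) (hε : 0 < ε) (hm : StrictMono lam)
    (hPb : ∀ k, |P k| ≤ K) (hP : ∀ k, P k = P (k - 1) + (lam k - k))
    (hs : ∀ j k, j ≠ k → ε ≤ |lam j - lam k|) :
    ∃ C : ℝ, 0 < C ∧ ∀ N : ℕ, ∃ B : ℤ → ℤ → ℝ,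
      (∀ n m, |B n m| ≤ C * Real.exp (-a * |(n : ℝ) - m|)) ∧
      (∀ n m, n ∉ Finset.Icc (-(N : ℤ)) N ∨ m ∉ Finset.Icc (-(N : ℤ)) N → B n m = 0) ∧
      (∀ k ∈ Finset.Icc (-(N : ℤ)) N, ∀ m ∈ Finset.Icc (-(N : ℤ)) N,
        ∑ n ∈ Finset.Icc (-(N : ℤ)) N, Real.exp (-a * (lam k - n) ^ 2) * B n m
          = if k = m then 1 else 0) ∧
      (∀ n ∈ Finset.Icc (-(N : ℤ)) N, ∀ k ∈ Finset.Icc (-(N : ℤ)) N,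
        ∑ m ∈ Finset.Icc (-(N : ℤ)) N, B n m * Real.exp (-a * (lam m - k) ^ 2)
          = if n = k then 1 else 0) := by
  classical
  set q := Real.exp (-(2 * a * ε)) with hq
  have hq1 : q < 1 := Real.exp_lt_one_iff.2 (by have := mul_pos ha hε; linarith)
  set G := ∑' k : ℤ, Real.exp (-(2 * a * ε) * |(k : ℝ)|) with hG
  refine ⟨Real.exp (a * (4 * K ^ 2 + 12 * K) + G + G / (1 - q)), Real.exp_pos _, fun N => ?_⟩
  set s := Finset.Icc (-(N : ℤ)) N with hsdef
  let z : ℤ → ℝ := fun k => Real.exp (2 * a * lam k)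
  have hz : ∀ k, 0 < z k := fun k => Real.exp_pos _
  have hzinj : ∀ j k, j ≠ k → z j ≠ z k := by
    intro j k hjk h
    have h1 := Real.exp_injective h
    have h2 : lam j = lam k := by
      have : (2 * a) ≠ 0 := by positivity
      exact mul_left_cancel₀ this h1
    exact hjk (hm.injective h2)
  let W : ℤ → Polynomial ℝ := fun m => ∏ k ∈ s.erase m, (Polynomial.X - Polynomial.C (z k))
  have hWev : ∀ m x, (W m).eval x = ∏ k ∈ s.erase m, (x - z k) := by
    intro m x
    simp only [W]
    rw [Polynomial.eval_prod]
    simp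
  have hWne : ∀ m, (W m).eval (z m) ≠ 0 := by
    intro m
    rw [hWev, Finset.prod_ne_zero_iff]
    intro k hk
    exact sub_ne_zero.2 (hzinj _ _ (Finset.ne_of_mem_erase hk).symm)
  let B : ℤ → ℤ → ℝ := fun n m => if n ∈ s ∧ m ∈ s then
    Real.exp (a * n ^ 2 + a * (lam m) ^ 2 + 2 * a * N * lam m) * (W m).coeff (n + N).toNat
      / (W m).eval (z m) else 0
  have hAB : ∀ k ∈ s, ∀ m ∈ s,
        ∑ n ∈ s, Real.exp (-a * (lam k - n) ^ 2) * B n m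
          = if k = m then 1 else 0 := by
    intro k hk m hmem
    have hdeg : (W m).natDegree < 2 * N + 1 := by
      have h1 : (W m).natDegree = (s.erase m).card := by
        simp only [W]
        rw [Polynomial.natDegree_prod_of_monic _ _ (fun i _ => Polynomial.monic_X_sub_C _)]
        simp
      rw [h1, Finset.card_erase_of_mem hmem, hsdef, Int.card_Icc]
      omega
    have h1 : ∑ n ∈ s, Real.exp (-a * (lam k - n) ^ 2) * B n m
        = Real.exp (-a * (lam k) ^ 2 + a * (lam m) ^ 2 + 2 * a * N * lam m - 2 * a * N * lam k)
          / (W m).eval (z m) * ∑ j ∈ Finset.range (2 * N + 1), (W m).coeff j * z k ^ j := by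
      rw [Finset.mul_sum]
      refine Finset.sum_bij' (fun n _ => (n + N).toNat) (fun j _ => (j : ℤ) - N) ?_ ?_ ?_ ?_ ?_
      · intro n hn
        rw [hsdef, Finset.mem_Icc] at hn
        rw [Finset.mem_range]; omega
      · intro n hn
        rw [Finset.mem_range] at hn
        rw [hsdef, Finset.mem_Icc]; omega
      · intro n hn
        rw [hsdef, Finset.mem_Icc] at hn
        omega
      · intro n hn
        simp
      · intro n hn
        have hn' := hn
        rw [hsdef, Finset.mem_Icc] at hn
        simp only [B, hn', hmem, and_self, if_true, z]
        rw [← Real.exp_nat_mul]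
        have hc : (((n + N).toNat : ℕ) : ℝ) = n + N := by
          have h : (((n + N).toNat : ℕ) : ℤ) = n + N := Int.toNat_of_nonneg (by omega)
          have h' : (((n + N).toNat : ℤ) : ℝ) = ((n + N : ℤ) : ℝ) := by rw [h]
          push_cast at h' ⊢
          linarith
        rw [hc]
        have e : Real.exp (-a * (lam k - n) ^ 2)
            * Real.exp (a * n ^ 2 + a * (lam m) ^ 2 + 2 * a * N * lam m)
            = Real.exp (-a * (lam k) ^ 2 + a * (lam m) ^ 2 + 2 * a * N * lam m - 2 * a * N * lam k)
              * Real.exp ((n + N) * (2 * a * lam k)) := by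
          rw [← Real.exp_add, ← Real.exp_add]; congr 1; ring
        calc _ = (Real.exp (-a * (lam k - n) ^ 2)
            * Real.exp (a * n ^ 2 + a * (lam m) ^ 2 + 2 * a * N * lam m)) *
              ((W m).coeff (n + N).toNat / (W m).eval (Real.exp (2 * a * lam m))) := by ring
          _ = _ := by rw [e]; ring
    rw [h1, ← Polynomial.eval_eq_sum_range' hdeg]
    split_ifs with hkm
    · subst hkm
      rw [div_mul_cancel₀ _ (hWne k)]
      rw [Real.exp_eq_one_iff]; ring
    · have : (W m).eval (z k) = 0 := by
        rw [hWev, Finset.prod_eq_zero_iff]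
        exact ⟨k, Finset.mem_erase.2 ⟨hkm, hk⟩, sub_self _⟩
      rw [this, mul_zero]
  refine ⟨B, ?_, ?_, hAB, ?_⟩
  · intro n m
    by_cases hnm : n ∈ s ∧ m ∈ s
    · obtain ⟨hn, hmem⟩ := hnm
      have hn' := hn
      rw [hsdef, Finset.mem_Icc] at hn'
      simp only [B, hn, hmem, and_self, if_true]
      have hc : (((n + N).toNat : ℕ) : ℝ) = n + N := by
        have h : (((n + N).toNat : ℕ) : ℤ) = n + N := Int.toNat_of_nonneg (by omega)
        have h' : (((n + N).toNat : ℤ) : ℝ) = ((n + N : ℤ) : ℝ) := by rw [h]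
        push_cast at h' ⊢
        linarith
      have hcb := coeff_prod_bound (s.erase m) z hz (z n) (hz n) (n + N).toNat
      have hzp : z n ^ (n + N).toNat = Real.exp (2 * a * ((n + N) * lam n)) := by
        simp only [z]
        rw [← Real.exp_nat_mul, hc]; congr 1; ring
      have hfar : ∀ i j : ℤ, 2 * a * ε * |(i : ℝ) - j| ≤ |2 * a * lam i - 2 * a * lam j| := by
        intro i j
        rw [← mul_sub, abs_mul, abs_of_pos (by positivity : 0 < 2 * a), mul_assoc]
        gcongr
        exact sep_lower lam ε hm hs i j
      have hmaxmul : ∀ i j : ℤ, max (2 * a * lam i) (2 * a * lam j) = 2 * a * max (lam i) (lam j) :=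
        fun i j => (mul_max_of_nonneg _ _ (by positivity)).symm
      have hup : ∏ k ∈ s.erase m, (z n + z k)
          ≤ Real.exp (2 * a * ∑ k ∈ s.erase m, max (lam n) (lam k) + G) := by
        calc ∏ k ∈ s.erase m, (z n + z k)
            ≤ ∏ k ∈ s.erase m, Real.exp (2 * a * max (lam n) (lam k)
              + Real.exp (-(2 * a * ε) * |(n : ℝ) - k|)) := by
              refine Finset.prod_le_prod (fun k _ => by linarith [hz n, hz k]) fun k _ => ?_
              have := exp_add_bound _ _ _ (hfar n k)
              rw [hmaxmul, ← neg_mul] at this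
              exact this
          _ ≤ _ := by
              rw [← Real.exp_sum, Finset.sum_add_distrib, ← Finset.mul_sum]
              refine Real.exp_le_exp.2 ?_
              have := sum_exp_abs_le (2 * a * ε) (by positivity) (s.erase m) n
              linarith
      have hlow : Real.exp (2 * a * ∑ k ∈ s.erase m, max (lam m) (lam k) - G / (1 - q))
          ≤ |(W m).eval (z m)| := by
        rw [hWev, Finset.abs_prod]
        calc _ ≤ ∏ k ∈ s.erase m, Real.exp (2 * a * max (lam m) (lam k)
              - Real.exp (-(2 * a * ε) * |(m : ℝ) - k|) / (1 - q)) := by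
              rw [← Real.exp_sum, Finset.sum_sub_distrib, ← Finset.mul_sum, ← Finset.sum_div]
              refine Real.exp_le_exp.2 ?_
              have := sum_exp_abs_le (2 * a * ε) (by positivity) (s.erase m) m
              have h2 := div_le_div_of_nonneg_right this (by linarith : 0 ≤ 1 - q)
              linarith
          _ ≤ _ := by
              refine Finset.prod_le_prod (fun k _ => (Real.exp_pos _).le) fun k hk => ?_
              have hne := Finset.ne_of_mem_erase hk
              have h1 : (1 : ℝ) ≤ |(m : ℝ) - k| := by
                have : (1 : ℤ) ≤ |m - k| := Int.one_le_abs (sub_ne_zero.2 hne.symm)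
                exact_mod_cast this
              have := exp_sub_bound _ _ _ q (hfar m k) (by
                rw [hq]
                refine Real.exp_le_exp.2 ?_
                have : 0 < 2 * a * ε := by positivity
                nlinarith) hq1
              rw [hmaxmul, ← neg_mul] at this
              exact this
      have hE := exponent_bound lam P K hm hPb hP N n m hn hmem
      rw [Finset.sum_sub_distrib] at hE
      rw [abs_div, abs_mul, abs_of_pos (Real.exp_pos _), div_le_iff₀ (abs_pos.2 (hWne m))]
      have hco : |(W m).coeff (n + N).toNat| ≤
          Real.exp (2 * a * ∑ k ∈ s.erase m, max (lam n) (lam k) + G - 2 * a * ((n + N) * lam n)) := by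
        rw [Real.exp_sub, le_div_iff₀ (Real.exp_pos _), ← hzp]
        exact hcb.trans hup
      calc _ ≤ Real.exp (a * n ^ 2 + a * (lam m) ^ 2 + 2 * a * N * lam m) *
            Real.exp (2 * a * ∑ k ∈ s.erase m, max (lam n) (lam k) + G - 2 * a * ((n + N) * lam n)) := by
            gcongr
        _ ≤ Real.exp (a * (4 * K ^ 2 + 12 * K) + G + G / (1 - q)) * Real.exp (-a * |(n : ℝ) - m|) *
            Real.exp (2 * a * ∑ k ∈ s.erase m, max (lam m) (lam k) - G / (1 - q)) := by
            rw [← Real.exp_add, ← Real.exp_add, ← Real.exp_add]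
            refine Real.exp_le_exp.2 ?_
            have := mul_le_mul_of_nonneg_left hE ha.le
            push_cast at this
            linarith
        _ ≤ _ := by gcongr
    · simp only [B, hnm, if_false, abs_zero]
      positivity
  · intro n m h
    have : ¬ (n ∈ s ∧ m ∈ s) := by tauto
    simp only [B, this, if_false]
  · intro n hn k hk
    let MA : Matrix s s ℝ := fun i j => Real.exp (-a * (lam i - (j : ℤ)) ^ 2)
    let MB : Matrix s s ℝ := fun i j => B i j
    have h1 : MA * MB = 1 := by
      ext i j
      rw [Matrix.mul_apply, Matrix.one_apply]
      have := hAB i i.2 j j.2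
      rw [← Finset.sum_coe_sort s] at this
      rw [show (∑ l, MA i l * MB l j) = ∑ l : s, Real.exp (-a * (lam i - ((l : ℤ) : ℝ)) ^ 2) * B l j from rfl,
        this]
      simp only [Subtype.ext_iff]
    have h2 := mul_eq_one_comm.1 h1
    have h3 := congrFun (congrFun h2 ⟨n, hn⟩) ⟨k, hk⟩
    rw [Matrix.mul_apply, Matrix.one_apply] at h3
    rw [← Finset.sum_coe_sort s]
    simp only [Subtype.mk.injEq] at h3
    exact h3

theorem summable_exp_sub (a : ℝ) (ha : 0 < a) (i : ℤ) :
    Summable (fun j : ℤ => Real.exp (-a * |(i : ℝ) - j|)) := by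
  have := (Equiv.subLeft i).summable_iff.2 (summable_exp_abs a ha)
  refine this.congr fun k => ?_
  simp

theorem summable_exp_sub' (a : ℝ) (ha : 0 < a) (j : ℤ) :
    Summable (fun i : ℤ => Real.exp (-a * |(i : ℝ) - j|)) := by
  refine (summable_exp_sub a ha j).congr fun k => ?_
  rw [abs_sub_comm]

theorem tsum_exp_sub (a : ℝ) (i : ℤ) :
    ∑' j : ℤ, Real.exp (-a * |(i : ℝ) - j|) = ∑' k : ℤ, Real.exp (-a * |(k : ℝ)|) := by
  rw [← (Equiv.subLeft i).tsum_eq (fun k : ℤ => Real.exp (-a * |(k : ℝ)|))]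
  refine tsum_congr fun k => ?_
  simp

/-- the shear `(i, j) ↦ (i - j, j)`. -/
def shearEquiv : ℤ × ℤ ≃ ℤ × ℤ where
  toFun p := (p.1 - p.2, p.2)
  invFun p := (p.1 + p.2, p.2)
  left_inv p := by simp
  right_inv p := by simp

theorem summable_shear (a : ℝ) (ha : 0 < a) (u : ℤ → ℝ) (hu0 : ∀ j, 0 ≤ u j) (hu : Summable u) :
    Summable (fun p : ℤ × ℤ => Real.exp (-a * |(p.1 : ℝ) - p.2|) * u p.2) := by
  have h := (summable_exp_abs a ha).mul_of_nonneg hu (fun _ => (Real.exp_pos _).le) hu0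
  refine (shearEquiv.summable_iff.2 h).congr fun p => ?_
  simp [shearEquiv]

theorem schur (a : ℝ) (ha : 0 < a) (C : ℝ) (hC : 0 < C) (M : ℤ → ℤ → ℂ)
    (hM : ∀ i j, ‖M i j‖ ≤ C * Real.exp (-a * |(i : ℝ) - j|)) :
    ∃ S : ℝ, 0 < S ∧ ∀ c : ℤ → ℂ, Summable (fun n => ‖c n‖ ^ 2) →
      Summable (fun i => ‖∑' j, M i j * c j‖ ^ 2) ∧
      ∑' i, ‖∑' j, M i j * c j‖ ^ 2 ≤ S * ∑' n, ‖c n‖ ^ 2 := by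
  set G := ∑' k : ℤ, Real.exp (-a * |(k : ℝ)|) with hG
  have hGpos : 0 < G := (summable_exp_abs a ha).tsum_pos (fun _ => (Real.exp_pos _).le) 0 (Real.exp_pos _)
  refine ⟨C ^ 2 * G * G, by positivity, fun c hc => ?_⟩
  have hF := summable_shear a ha (fun j => ‖c j‖ ^ 2) (fun j => by positivity) hc
  have hFi : ∀ i : ℤ, Summable (fun j : ℤ => Real.exp (-a * |(i : ℝ) - j|) * ‖c j‖ ^ 2) :=
    fun i => hF.prod_factor i
  have hY : ∀ i : ℤ, Summable (fun j : ℤ => Real.exp (-a * |(i : ℝ) - j|) * ‖c j‖) := by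
    intro i
    refine Summable.of_nonneg_of_le (fun j => by positivity) (fun j => ?_)
      ((summable_exp_sub a ha i).add (hFi i))
    have := Real.exp_pos (-a * |(i : ℝ) - j|)
    nlinarith [sq_nonneg (‖c j‖ - 1 / 2)]
  have hcs : ∀ i : ℤ, (∑' j : ℤ, Real.exp (-a * |(i : ℝ) - j|) * ‖c j‖) ^ 2
      ≤ G * ∑' j : ℤ, Real.exp (-a * |(i : ℝ) - j|) * ‖c j‖ ^ 2 := by
    intro i
    set Y := ∑' j : ℤ, Real.exp (-a * |(i : ℝ) - j|) * ‖c j‖ with hYd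
    set X := ∑' j : ℤ, Real.exp (-a * |(i : ℝ) - j|) * ‖c j‖ ^ 2 with hXd
    have h1 : ∑' j : ℤ, Real.exp (-a * |(i : ℝ) - j|) * (‖c j‖ - Y / G) ^ 2
        = X - 2 * (Y / G) * Y + (Y / G) ^ 2 * G := by
      have e : (fun j : ℤ => Real.exp (-a * |(i : ℝ) - j|) * (‖c j‖ - Y / G) ^ 2)
        = fun j : ℤ => (Real.exp (-a * |(i : ℝ) - j|) * ‖c j‖ ^ 2
          - 2 * (Y / G) * (Real.exp (-a * |(i : ℝ) - j|) * ‖c j‖))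
          + (Y / G) ^ 2 * Real.exp (-a * |(i : ℝ) - j|) := by
        funext j; ring
      rw [e, Summable.tsum_add ((hFi i).sub ((hY i).mul_left _)) ((summable_exp_sub a ha i).mul_left _),
        Summable.tsum_sub (hFi i) ((hY i).mul_left _), tsum_mul_left, tsum_mul_left, tsum_exp_sub]
    have h2 : 0 ≤ ∑' j : ℤ, Real.exp (-a * |(i : ℝ) - j|) * (‖c j‖ - Y / G) ^ 2 :=
      tsum_nonneg fun j => by positivity
    rw [h1] at h2
    have h3 : X - 2 * (Y / G) * Y + (Y / G) ^ 2 * G = (G * X - Y ^ 2) / G := by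
      field_simp; ring
    rw [h3] at h2
    have h4 := (div_nonneg_iff.1 h2).resolve_right (fun h => by linarith [h.2])
    linarith [h4.1]
  have hb : ∀ i, ‖∑' j, M i j * c j‖ ^ 2
      ≤ C ^ 2 * G * ∑' j : ℤ, Real.exp (-a * |(i : ℝ) - j|) * ‖c j‖ ^ 2 := by
    intro i
    have h1 : ‖∑' j, M i j * c j‖ ≤ ∑' j : ℤ, C * (Real.exp (-a * |(i : ℝ) - j|) * ‖c j‖) := by
      refine tsum_of_norm_bounded ((hY i).mul_left C).hasSum fun j => ?_
      rw [norm_mul, ← mul_assoc]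
      gcongr
      exact hM i j
    rw [tsum_mul_left] at h1
    calc _ ≤ (C * ∑' j : ℤ, Real.exp (-a * |(i : ℝ) - j|) * ‖c j‖) ^ 2 := by gcongr
      _ = C ^ 2 * (∑' j : ℤ, Real.exp (-a * |(i : ℝ) - j|) * ‖c j‖) ^ 2 := by ring
      _ ≤ C ^ 2 * (G * ∑' j : ℤ, Real.exp (-a * |(i : ℝ) - j|) * ‖c j‖ ^ 2) := by
          gcongr; exact hcs i
      _ = _ := by ring
  have hsum : Summable (fun i : ℤ => C ^ 2 * G * ∑' j : ℤ, Real.exp (-a * |(i : ℝ) - j|) * ‖c j‖ ^ 2) :=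
    hF.prod.mul_left _
  have hs : Summable (fun i => ‖∑' j, M i j * c j‖ ^ 2) :=
    Summable.of_nonneg_of_le (fun i => by positivity) hb hsum
  refine ⟨hs, (hs.tsum_le_tsum hb hsum).trans (le_of_eq ?_)⟩
  rw [tsum_mul_left]
  have : ∑' i : ℤ, ∑' j : ℤ, Real.exp (-a * |(i : ℝ) - j|) * ‖c j‖ ^ 2 = G * ∑' n, ‖c n‖ ^ 2 := by
    rw [← Summable.tsum_comm (f := fun i j : ℤ => Real.exp (-a * |(i : ℝ) - j|) * ‖c j‖ ^ 2) hF,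
      ← tsum_mul_left]
    refine tsum_congr fun j => ?_
    rw [tsum_mul_right]
    congr 1
    rw [hG, ← tsum_exp_sub a j]
    exact tsum_congr fun i => by rw [abs_sub_comm]
  rw [this]; ring

theorem assoc_id (a : ℝ) (ha : 0 < a) (C D : ℝ) (hC : 0 < C) (hD : 0 < D) (M Q : ℤ → ℤ → ℂ)
    (hM : ∀ i j, ‖M i j‖ ≤ C * Real.exp (-a * |(i : ℝ) - j|))
    (hQ : ∀ i j, ‖Q i j‖ ≤ D * Real.exp (-a * |(i : ℝ) - j|))
    (hMQ : ∀ i k, ∑' j, M i j * Q j k = if i = k then 1 else 0)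
    (c : ℤ → ℂ) (hc : Summable (fun n => ‖c n‖ ^ 2)) (i : ℤ) :
    ∑' j, M i j * ∑' k, Q j k * c k = c i := by
  obtain ⟨T, hT⟩ : ∃ T : ℝ, ∀ k, ‖c k‖ ≤ T := by
    refine ⟨1 + ∑' n, ‖c n‖ ^ 2, fun k => ?_⟩
    have h1 : ‖c k‖ ^ 2 ≤ ∑' n, ‖c n‖ ^ 2 := hc.le_tsum k fun _ _ => by positivity
    nlinarith [sq_nonneg (‖c k‖ - 1)]
  have hsum : Summable (Function.uncurry fun k j : ℤ => M i j * (Q j k * c k)) := by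
    have h := (summable_shear a ha (fun j : ℤ => Real.exp (-a * |(i : ℝ) - j|))
      (fun j => (Real.exp_pos _).le) (summable_exp_sub a ha i)).mul_left (C * D * T)
    refine Summable.of_norm_bounded h fun p => ?_
    obtain ⟨k, j⟩ := p
    simp only [Function.uncurry]
    rw [norm_mul, norm_mul]
    have h1 := hM i j
    have h2 := hQ j k
    have h3 := hT k
    rw [abs_sub_comm] at h2
    calc _ ≤ (C * Real.exp (-a * |(i : ℝ) - j|)) * ((D * Real.exp (-a * |(k : ℝ) - j|)) * T) := by
          gcongr
      _ = _ := by ring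
  calc ∑' j, M i j * ∑' k, Q j k * c k = ∑' j, ∑' k, M i j * (Q j k * c k) := by
        simp_rw [tsum_mul_left]
    _ = ∑' k, ∑' j, M i j * (Q j k * c k) := Summable.tsum_comm hsum
    _ = ∑' k, (if i = k then 1 else 0) * c k := by
        refine tsum_congr fun k => ?_
        rw [← hMQ i k, ← tsum_mul_right]
        exact tsum_congr fun j => by ring
    _ = c i := by
        rw [tsum_eq_single i]
        · simp
        · intro k hk
          simp [hk.symm]

theorem gauss_bound (a : ℝ) (ha : 0 < a) (lam : ℤ → ℝ) (D : ℝ) (hD : ∀ k, |lam k - k| ≤ D) (k n : ℤ) :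
    Real.exp (-a * (lam k - n) ^ 2) ≤ Real.exp (a * (D + 1)) * Real.exp (-a * |(k : ℝ) - n|) := by
  rw [← Real.exp_add]
  refine Real.exp_le_exp.2 ?_
  have h1 : |(k : ℝ) - n| ≤ |lam k - n| + D := by
    have e : (k : ℝ) - n = (lam k - n) - (lam k - k) := by ring
    rw [e]
    exact (abs_sub _ _).trans (by linarith [hD k])
  have h2 : |lam k - n| ≤ (lam k - n) ^ 2 + 1 := by
    rw [← sq_abs (lam k - n)]
    nlinarith [sq_nonneg (|lam k - n| - 1), sq_nonneg (|lam k - n|)]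
  have h3 : |(k : ℝ) - n| ≤ (lam k - n) ^ 2 + 1 + D := by linarith
  have := mul_le_mul_of_nonneg_left h3 ha.le
  linarith

theorem full_inv (a : ℝ) (ha : 0 < a) (lam P : ℤ → ℝ) (K ε : ℝ) (hε : 0 < ε) (hm : StrictMono lam)
    (hPb : ∀ k, |P k| ≤ K) (hP : ∀ k, P k = P (k - 1) + (lam k - k))
    (hs : ∀ j k, j ≠ k → ε ≤ |lam j - lam k|)
    (D : ℝ) (hD : ∀ k, |lam k - k| ≤ D) :
    ∃ C : ℝ, 0 < C ∧ ∃ B : ℤ → ℤ → ℝ,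
      (∀ n m, |B n m| ≤ C * Real.exp (-a * |(n : ℝ) - m|)) ∧
      (∀ k m, ∑' n : ℤ, Real.exp (-a * (lam k - n) ^ 2) * B n m = if k = m then 1 else 0) ∧
      (∀ n k : ℤ, ∑' m : ℤ, B n m * Real.exp (-a * (lam m - k) ^ 2) = if n = k then 1 else 0) := by
  obtain ⟨C, hC, h⟩ := finite_inv a ha lam P K ε hε hm hPb hP hs
  choose BN hb h0 h1 h2 using h
  refine ⟨C, hC, ?_⟩
  let U : Ultrafilter ℕ := hyperfilter ℕ
  have hU : (U : Filter ℕ) ≤ atTop := by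
    rw [← Nat.cofinite_eq_atTop]; exact hyperfilter_le_cofinite
  have hlim : ∀ n m : ℤ, ∃ x : ℝ, |x| ≤ C * Real.exp (-a * |(n : ℝ) - m|) ∧
      Tendsto (fun N => BN N n m) U (nhds x) := by
    intro n m
    obtain ⟨x, hx, hx2⟩ := (isCompact_Icc (a := -(C * Real.exp (-a * |(n : ℝ) - m|)))
      (b := C * Real.exp (-a * |(n : ℝ) - m|))).ultrafilter_le_nhds'
      (U.map (fun N => BN N n m)) (by
        rw [Ultrafilter.mem_map]
        refine Filter.univ_mem' fun N => ?_
        exact abs_le.1 (hb N n m))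
    exact ⟨x, abs_le.2 hx, hx2⟩
  choose B hB hBlim using hlim
  have hev : ∀ k : ℤ, ∀ᶠ N : ℕ in (U : Filter ℕ), k ∈ Finset.Icc (-(N : ℤ)) N := by
    intro k
    refine hU ?_
    filter_upwards [eventually_ge_atTop k.natAbs] with N hN
    rw [Finset.mem_Icc]; omega
  set E := Real.exp (a * (D + 1)) with hE
  refine ⟨B, hB, ?_, ?_⟩
  · intro k m
    have ht : Tendsto (fun N => ∑' n : ℤ, Real.exp (-a * (lam k - n) ^ 2) * BN N n m) U
        (nhds (∑' n : ℤ, Real.exp (-a * (lam k - n) ^ 2) * B n m)) := by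
      refine tendsto_tsum_of_dominated_convergence
        (bound := fun n : ℤ => E * C * Real.exp (-a * |(k : ℝ) - n|)) ((summable_exp_sub a ha k).mul_left _)
        (fun n => (hBlim n m).const_mul _) ?_
      refine Eventually.of_forall fun N n => ?_
      rw [norm_mul, Real.norm_eq_abs, Real.norm_eq_abs, abs_of_pos (Real.exp_pos _)]
      have g1 := gauss_bound a ha lam D hD k n
      have g2 : |BN N n m| ≤ C := (hb N n m).trans (by
        have : Real.exp (-a * |(n : ℝ) - m|) ≤ 1 := Real.exp_le_one_iff.2 (by
          have := mul_nonneg ha.le (abs_nonneg ((n : ℝ) - m)); linarith)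
        nlinarith)
      calc _ ≤ (E * Real.exp (-a * |(k : ℝ) - n|)) * C := by gcongr
        _ = _ := by ring
    refine tendsto_nhds_unique ht (Tendsto.congr' ?_ tendsto_const_nhds)
    filter_upwards [hev k, hev m] with N hk hmm
    rw [← h1 N k hk m hmm, tsum_eq_sum]
    intro n hn
    rw [h0 N n m (Or.inl hn), mul_zero]
  · intro n k
    have ht : Tendsto (fun N => ∑' m : ℤ, BN N n m * Real.exp (-a * (lam m - k) ^ 2)) U
        (nhds (∑' m : ℤ, B n m * Real.exp (-a * (lam m - k) ^ 2))) := by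
      refine tendsto_tsum_of_dominated_convergence
        (bound := fun m : ℤ => C * Real.exp (-a * |(n : ℝ) - m|)) ((summable_exp_sub a ha n).mul_left _)
        (fun m => (hBlim n m).mul_const _) ?_
      refine Eventually.of_forall fun N m => ?_
      rw [norm_mul, Real.norm_eq_abs, Real.norm_eq_abs, abs_of_pos (Real.exp_pos _)]
      have g1 : Real.exp (-a * (lam m - k) ^ 2) ≤ 1 := Real.exp_le_one_iff.2 (by
          have := mul_nonneg ha.le (sq_nonneg (lam m - (k : ℝ))); linarith)
      have g2 := hb N n m
      have g3 := abs_nonneg (BN N n m)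
      nlinarith
    refine tendsto_nhds_unique ht (Tendsto.congr' ?_ tendsto_const_nhds)
    filter_upwards [hev n, hev k] with N hn hk
    rw [← h2 N n hn k hk, tsum_eq_sum]
    intro m hmm
    rw [h0 N n m (Or.inr hmm), zero_mul]

/-- every separated `Λ ⊂ ℝ` with `D⁻(Λ) > 1` contains a complete
interpolating sequence for `V²_a`. -/
theorem statement1 (a : ℝ) (ha : 0 < a) (Λ : Set ℝ)
    (hsep : IsSeparatedSet Λ) (hdens : 1 < lowerBeurlingDensity Λ) :
    ∃ Λ' ⊆ Λ, IsCompleteInterpolatingV2 (a : ℂ) Λ' := by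
  obtain ⟨lam, P, K, hm, hmem, hPb, hP⟩ := select_seq Λ hdens
  obtain ⟨ε, hε, hs⟩ := hsep
  have hs' : ∀ j k, j ≠ k → ε ≤ |lam j - lam k| := fun j k hjk =>
    hs _ (hmem j) _ (hmem k) (fun h => hjk (hm.injective h))
  have hD : ∀ k, |lam k - k| ≤ 2 * K := by
    intro k
    have h : lam k - k = P k - P (k - 1) := by rw [hP k]; ring
    rw [h]
    exact (abs_sub _ _).trans (by linarith [hPb k, hPb (k - 1)])
  obtain ⟨C, hC, B, hB, hAB, hBA⟩ := full_inv a ha lam P K ε hε hm hPb hP hs' _ hD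
  set E := Real.exp (a * (2 * K + 1)) with hE
  have hEpos : 0 < E := Real.exp_pos _
  let MA : ℤ → ℤ → ℂ := fun k n => ((Real.exp (-a * (lam k - n) ^ 2) : ℝ) : ℂ)
  let MB : ℤ → ℤ → ℂ := fun n m => ((B n m : ℝ) : ℂ)
  have hMA : ∀ i j, ‖MA i j‖ ≤ E * Real.exp (-a * |(i : ℝ) - j|) := by
    intro i j
    simp only [MA]
    rw [Complex.norm_real, Real.norm_eq_abs, abs_of_pos (Real.exp_pos _)]
    exact gauss_bound a ha lam _ hD i j
  have hMB : ∀ i j, ‖MB i j‖ ≤ C * Real.exp (-a * |(i : ℝ) - j|) := by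
    intro i j
    simp only [MB]
    rw [Complex.norm_real, Real.norm_eq_abs]
    exact hB i j
  have hMAB : ∀ i k, ∑' j, MA i j * MB j k = if i = k then 1 else 0 := by
    intro i k
    have := congrArg (fun x : ℝ => (x : ℂ)) (hAB i k)
    simp only [Complex.ofReal_tsum, Complex.ofReal_mul] at this
    simp only [MA, MB]
    rw [this]
    split_ifs <;> simp
  have hMBA : ∀ i k, ∑' j, MB i j * MA j k = if i = k then 1 else 0 := by
    intro i k
    have := congrArg (fun x : ℝ => (x : ℂ)) (hBA i k)
    simp only [Complex.ofReal_tsum, Complex.ofReal_mul] at this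
    simp only [MA, MB]
    rw [this]
    split_ifs <;> simp
  have hg : ∀ (c : ℤ → ℂ) (k : ℤ), gaussShiftSum (a : ℂ) c (lam k) = ∑' n, MA k n * c n := by
    intro c k
    unfold gaussShiftSum
    refine tsum_congr fun n => ?_
    simp only [MA]
    push_cast
    ring
  let e : ℤ ≃ Set.range lam := Equiv.ofInjective lam hm.injective
  have he : ∀ k, ((e k : Set.range lam) : ℝ) = lam k := fun k => rfl
  obtain ⟨SA, hSA, hA⟩ := schur a ha E hEpos MA hMA
  obtain ⟨SB, hSB, hBs⟩ := schur a ha C hC MB hMB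
  refine ⟨Set.range lam, by rintro _ ⟨k, rfl⟩; exact hmem k, ?_, ?_⟩
  · refine ⟨1 / SB, by positivity, SA, hSA, fun c hc => ?_⟩
    have h1 : ∑' x : Set.range lam, ‖gaussShiftSum (a : ℂ) c (x : ℝ)‖ ^ 2
        = ∑' k, ‖∑' n, MA k n * c n‖ ^ 2 := by
      rw [← e.tsum_eq]
      exact tsum_congr fun k => by rw [he, hg]
    rw [h1]
    obtain ⟨h2, h3⟩ := hA c hc
    refine ⟨?_, h3⟩
    obtain ⟨h4, h5⟩ := hBs _ h2
    rw [tsum_congr fun i => by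
      rw [assoc_id a ha C E hC hEpos MB MA hMB hMA hMBA c hc i]] at h5
    rw [one_div, inv_mul_le_iff₀ hSB]
    exact h5
  · intro y hy
    have hy' : Summable (fun k => ‖y (e k)‖ ^ 2) := e.summable_iff.2 hy
    refine ⟨fun n => ∑' k, MB n k * y (e k), (hBs _ hy').1, ?_⟩
    intro x
    obtain ⟨k, rfl⟩ := e.surjective x
    rw [he, hg]
    exact assoc_id a ha E C hEpos hC MA MB hMA hMB hMAB (fun k => y (e k)) hy' k
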